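/- arXiv:2404.19053 — 2 statements merged into one kernel-verified Lean document; each statement's English description precedes it below -/
import Mathlib

section
/- For all real numbers s > 0 and y > 0, the horizontal-ray and vertical-ray contour representations of the upper incomplete Gamma function at imaginary argument agree: ∫_0^∞ (iy + t)^{-s-1} e^{-(iy+t)} dt = i ∫_y^∞ (iu)^{-s-1} e^{-iu} du, where complex powers are taken with the principal branch. -/
open MeasureTheory Real

open Asymptotics Bornology Filter Set Topology

/-!
By Cauchy's theorem on the rectangle with opposite corners `a + ib` and `R + iR`, the integrals of
`f` from `a + ib` to `R + ib` and to `a + iR` differ by the integrals over the two far sides. These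
have length `O(R)` and stay at distance at least `R` from the origin, so they vanish in the limit
as soon as `f z = o(1 / z)` in the quadrant. The Gamma integrand `z ^ (-s - 1) * exp (-z)` is
`O(‖z‖ ^ (-Re s - 1))` there: the exponential is bounded on right half-planes, and the argument of
`z` is bounded.
-/

lemma isLittleO_rpow_rpow_atTop {p q : ℝ} (hpq : p < q) :
    (fun x : ℝ => x ^ p) =o[atTop] fun x => x ^ q := by
  have hquot : Tendsto (fun x : ℝ => x ^ (-(q - p))) atTop (𝓝 0) :=
    tendsto_rpow_neg_atTop (sub_pos.2 hpq)
  refine (isLittleO_iff_tendsto' ?_).2 (hquot.congr' ?_)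
  · filter_upwards [eventually_gt_atTop 0] with x hx hx0
    exact absurd hx0 (rpow_pos_of_pos hx q).ne'
  · filter_upwards [eventually_gt_atTop 0] with x hx
    rw [neg_sub, rpow_sub hx]

section Curves

variable {E F : Type*} [NormedAddCommGroup E] [NormedAddCommGroup F] {f : F → E} {S : Set F}
  {c : ℝ}

lemma tendsto_intervalIntegral_comp_zero_of_isLittleO_inv_norm [NormedSpace ℝ E] {γ : ℝ → ℝ → F}
    (hf : f =o[cobounded F ⊓ 𝓟 S] fun z => ‖z‖⁻¹)
    (hγS : ∀ᶠ R in atTop, ∀ t ∈ Ioc c R, γ R t ∈ S) (hγ : ∀ R t, R ≤ ‖γ R t‖) :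
    Tendsto (fun R => ∫ t in c..R, f (γ R t)) atTop (𝓝 0) := by
  refine (isLittleO_one_iff ℝ).1 (isLittleO_iff.2 fun ε hε => ?_)
  obtain ⟨M, -, hM⟩ := hasBasis_cobounded_norm.eventually_iff.1
    (eventually_inf_principal.1 (hf.def (half_pos hε)))
  filter_upwards [hγS, eventually_ge_atTop M, eventually_ge_atTop c, eventually_ge_atTop (-c),
    eventually_gt_atTop 0] with R hRS hRM hcR hcR' hR
  have hbound : ∀ t ∈ uIoc c R, ‖f (γ R t)‖ ≤ ε / 2 * R⁻¹ := fun t ht => by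
    rw [uIoc_of_le hcR] at ht
    calc ‖f (γ R t)‖ ≤ ε / 2 * ‖‖γ R t‖⁻¹‖ := hM (hRM.trans (hγ R t)) (hRS t ht)
      _ = ε / 2 * ‖γ R t‖⁻¹ := by rw [norm_inv, norm_norm]
      _ ≤ ε / 2 * R⁻¹ := by gcongr; exact hγ R t
  calc ‖∫ t in c..R, f (γ R t)‖ ≤ ε / 2 * R⁻¹ * |R - c| :=
        intervalIntegral.norm_integral_le_of_norm_le_const hbound
    _ ≤ ε / 2 * R⁻¹ * (2 * R) := by gcongr; exact abs_le.2 ⟨by linarith, by linarith⟩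
    _ = ε * ‖(1 : ℝ)‖ := by rw [norm_one]; field_simp

lemma integrableOn_Ioi_comp_of_isBigO_norm_rpow_neg {γ : ℝ → F} {p : ℝ} (hfc : ContinuousOn f S)
    (hp : 1 < p) (hf : f =O[cobounded F ⊓ 𝓟 S] fun z => ‖z‖ ^ (-p)) (hγc : Continuous γ)
    (hγS : MapsTo γ (Ici c) S) (hγ : ∀ t, t ≤ ‖γ t‖) :
    IntegrableOn (fun t => f (γ t)) (Ioi c) := by
  have hγ_tendsto : Tendsto γ atTop (cobounded F ⊓ 𝓟 S) :=
    tendsto_inf.2 ⟨tendsto_norm_atTop_iff_cobounded.1 (tendsto_atTop_mono hγ tendsto_id),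
      tendsto_principal.2 ((eventually_ge_atTop c).mono hγS)⟩
  have hγ_rpow : (fun t => ‖γ t‖ ^ (-p)) =O[atTop] fun t : ℝ => t ^ (-p) := by
    refine IsBigO.of_norm_eventuallyLE ?_
    filter_upwards [eventually_gt_atTop 0] with t ht
    rw [norm_of_nonneg (by positivity)]
    exact rpow_le_rpow_of_nonpos ht (hγ t) (by linarith)
  have hloc : LocallyIntegrableOn (fun t => f (γ t)) (Ici c) :=
    (hfc.comp hγc.continuousOn hγS).locallyIntegrableOn measurableSet_Ici
  exact (hloc.integrableOn_of_isBigO_atTop ((hf.comp_tendsto hγ_tendsto).trans hγ_rpow)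
    (integrableAtFilter_rpow_atTop_iff.2 (by linarith))).mono_set Ioi_subset_Ici_self

end Curves

section QuadrantContour

variable {E : Type*} [NormedAddCommGroup E] [NormedSpace ℂ E] {f : ℂ → E} {a b : ℝ}

theorem integral_Ioi_horizontal_eq_I_smul_integral_Ioi_vertical_of_isLittleO
    (hfd : DifferentiableOn ℂ f (Ici a ×ℂ Ici b))
    (hf : f =o[cobounded ℂ ⊓ 𝓟 (Ici a ×ℂ Ici b)] fun z => ‖z‖⁻¹)
    (hhor : IntegrableOn (fun x : ℝ => f (x + b * Complex.I)) (Ioi a))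
    (hver : IntegrableOn (fun y : ℝ => f (a + y * Complex.I)) (Ioi b)) :
    ∫ x in Ioi a, f (x + b * Complex.I) =
      Complex.I • ∫ y in Ioi b, f (a + y * Complex.I) := by
  have hnear := (intervalIntegral_tendsto_integral_Ioi a hhor tendsto_id).sub
    ((intervalIntegral_tendsto_integral_Ioi b hver tendsto_id).const_smul Complex.I)
  have htop : Tendsto (fun R : ℝ => ∫ x in a..R, f (x + R * Complex.I)) atTop (𝓝 0) := by
    refine tendsto_intervalIntegral_comp_zero_of_isLittleO_inv_norm
      (γ := fun R x => x + R * Complex.I) hf ?_ fun R x => ?_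
    · filter_upwards [eventually_ge_atTop b] with R hR x hx
      simpa [Complex.mem_reProdIm] using And.intro hx.1.le hR
    · simpa using Complex.im_le_norm ((x : ℂ) + R * Complex.I)
  have hright : Tendsto (fun R : ℝ => ∫ y in b..R, f (R + y * Complex.I)) atTop (𝓝 0) := by
    refine tendsto_intervalIntegral_comp_zero_of_isLittleO_inv_norm
      (γ := fun R y => R + y * Complex.I) hf ?_ fun R y => ?_
    · filter_upwards [eventually_ge_atTop a] with R hR y hy
      simpa [Complex.mem_reProdIm] using And.intro hR hy.1.le
    · simpa using Complex.re_le_norm ((R : ℂ) + y * Complex.I)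
  have hfar := htop.sub (hright.const_smul Complex.I)
  rw [smul_zero, sub_zero] at hfar
  refine sub_eq_zero.1 (tendsto_nhds_unique (hnear.congr' ?_) hfar)
  filter_upwards [eventually_ge_atTop a, eventually_ge_atTop b] with R haR hbR
  have hrect := Complex.integral_boundary_rect_eq_zero_of_differentiableOn f ⟨a, b⟩ ⟨R, R⟩ <|
    hfd.mono <| by
      rw [uIcc_of_le haR, uIcc_of_le hbR]
      exact inter_subset_inter (preimage_mono Icc_subset_Ici_self)
        (preimage_mono Icc_subset_Ici_self)
  rw [← sub_eq_zero, ← hrect, id]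
  abel

theorem integral_Ioi_horizontal_eq_I_smul_integral_Ioi_vertical_of_isBigO {p : ℝ}
    (hfd : DifferentiableOn ℂ f (Ici a ×ℂ Ici b)) (hp : 1 < p)
    (hf : f =O[cobounded ℂ ⊓ 𝓟 (Ici a ×ℂ Ici b)] fun z => ‖z‖ ^ (-p)) :
    ∫ x in Ioi a, f (x + b * Complex.I) =
      Complex.I • ∫ y in Ioi b, f (a + y * Complex.I) := by
  have hrpow : (fun x : ℝ => x ^ (-p)) =o[atTop] fun x => x⁻¹ := by
    simpa only [rpow_neg_one] using isLittleO_rpow_rpow_atTop (neg_lt_neg hp)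
  refine integral_Ioi_horizontal_eq_I_smul_integral_Ioi_vertical_of_isLittleO hfd
    (hf.trans_isLittleO ((hrpow.comp_tendsto tendsto_norm_cobounded_atTop).mono inf_le_left)) ?_ ?_
  · refine integrableOn_Ioi_comp_of_isBigO_norm_rpow_neg hfd.continuousOn hp hf (by fun_prop)
      (fun x hx => ?_) fun x => ?_
    · simpa [Complex.mem_reProdIm] using hx
    · simpa using Complex.re_le_norm ((x : ℂ) + b * Complex.I)
  · refine integrableOn_Ioi_comp_of_isBigO_norm_rpow_neg hfd.continuousOn hp hf (by fun_prop)
      (fun y hy => ?_) fun y => ?_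
    · simpa [Complex.mem_reProdIm] using hy
    · simpa using Complex.im_le_norm ((a : ℂ) + y * Complex.I)

end QuadrantContour

lemma isBigO_cpow_mul_exp_neg (w : ℂ) (a : ℝ) :
    (fun z => z ^ w * Complex.exp (-z)) =O[cobounded ℂ ⊓ 𝓟 {z | a ≤ z.re}]
      fun z => ‖z‖ ^ w.re := by
  have hcpow : (fun z : ℂ => z ^ w) =O[cobounded ℂ ⊓ 𝓟 {z | a ≤ z.re}] fun z => ‖z‖ ^ w.re :=
    Complex.isBigO_cpow_rpow isBoundedUnder_const
  have hexp : (fun z => Complex.exp (-z)) =O[cobounded ℂ ⊓ 𝓟 {z | a ≤ z.re}]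
      fun _ => (1 : ℝ) := by
    refine IsBigO.of_bound (exp (-a)) (eventually_inf_principal.2 (.of_forall fun z hz => ?_))
    simpa [Complex.norm_exp] using hz
  simpa using hcpow.mul hexp

lemma differentiableOn_cpow_mul_exp_neg (w : ℂ) :
    DifferentiableOn ℂ (fun z => z ^ w * Complex.exp (-z)) Complex.slitPlane := fun _ hz =>
  ((differentiableAt_id.cpow_const hz).mul differentiableAt_id.neg.cexp).differentiableWithinAt

lemma Ici_reProdIm_Ici_subset_slitPlane {a b : ℝ} (hab : 0 < a ∨ 0 < b) :
    Ici a ×ℂ Ici b ⊆ Complex.slitPlane := fun _ hz =>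
  hab.imp (fun ha => ha.trans_le hz.1) fun hb => (hb.trans_le hz.2).ne'

theorem inc_gamma_contour_deformation_general {s : ℂ} {a b : ℝ} (hs : 0 < s.re)
    (hab : 0 < a ∨ 0 < b) :
    ∫ x in Ioi a, (x + b * Complex.I : ℂ) ^ (-s - 1) * Complex.exp (-(x + b * Complex.I)) =
      Complex.I * ∫ y in Ioi b,
        (a + y * Complex.I : ℂ) ^ (-s - 1) * Complex.exp (-(a + y * Complex.I)) := by
  have hdecay : (fun z => z ^ (-s - 1) * Complex.exp (-z)) =O[cobounded ℂ ⊓ 𝓟 (Ici a ×ℂ Ici b)]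
      fun z => ‖z‖ ^ (-(s.re + 1)) := by
    have hre : (-s - 1).re = -(s.re + 1) := by simp [sub_eq_add_neg, add_comm]
    rw [← hre]
    exact (isBigO_cpow_mul_exp_neg _ a).mono (inf_le_inf_left _ (principal_mono.2 fun _ hz => hz.1))
  exact integral_Ioi_horizontal_eq_I_smul_integral_Ioi_vertical_of_isBigO
    ((differentiableOn_cpow_mul_exp_neg _).mono (Ici_reProdIm_Ici_subset_slitPlane hab))
    (by linarith) hdecay

/-- For all real `s > 0` and `y > 0`, the horizontal-ray and vertical-ray contour
representations of the upper incomplete Gamma function at imaginary argument agree: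
`∫_0^∞ (iy + t)^(-s-1) e^{-(iy+t)} dt = i ∫_y^∞ (iu)^(-s-1) e^{-iu} du`,
with principal branches of the complex powers. -/
theorem inc_gamma_contour_deformation (s y : ℝ) (hs : 0 < s) (hy : 0 < y) :
    (∫ t in Set.Ioi (0 : ℝ),
        (Complex.I * (y : ℂ) + (t : ℂ)) ^ (-(s : ℂ) - 1)
          * Complex.exp (-(Complex.I * (y : ℂ) + (t : ℂ))))
      = Complex.I * ∫ u in Set.Ioi y,
          (Complex.I * (u : ℂ)) ^ (-(s : ℂ) - 1) * Complex.exp (-(Complex.I * (u : ℂ))) := by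
  simpa [mul_comm, add_comm] using
    inc_gamma_contour_deformation_general (s := s) (a := 0) hs (Or.inr hy)
end

section
/- Fix real numbers r ≥ 0, φ, ρ > 0, ν > 0, and α₀ ∈ (0, 1). Define F(α) := ∫_0^∞ ω^{−α} φ²(ρ² + ω²)^{−ν−1/2} cos(2πωr) dω for α ∈ (0, 1). Then F is differentiable at α₀ with derivative F′(α₀) = −∫_0^∞ ω^{−α₀} log(ω) φ²(ρ² + ω²)^{−ν−1/2} cos(2πωr) dω; that is, differentiation with respect to the singularity parameter α may be exchanged with the Fourier integration. -/
open MeasureTheory Real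

open Filter Topology Asymptotics

/-!
With the singularity factored out, `F(α)` is the Mellin transform at `s = 1 - α` of the Matérn
density times the cosine. That product is bounded near `0` and `O(ω ^ (-(2ν + 1)))` at infinity, so
its Mellin transform may be differentiated under the integral sign on the strip
`0 < Re s < 2ν + 1`, whose real points correspond to `-2ν < α < 1`.
-/

lemma mellin_ofReal (f : ℝ → ℝ) (s : ℝ) :
    mellin (fun t ↦ (f t : ℂ)) s = (∫ t in Set.Ioi (0 : ℝ), t ^ (s - 1) * f t : ℝ) := by
  rw [mellin, ← integral_complex_ofReal]
  refine setIntegral_congr_fun measurableSet_Ioi fun t ht ↦ ?_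
  simp [Complex.ofReal_cpow (le_of_lt ht)]

lemma hasDerivAt_integral_rpow_sub_one_mul {f : ℝ → ℝ} {a b s : ℝ}
    (hf : LocallyIntegrableOn f (Set.Ioi 0))
    (hf_top : f =O[atTop] (· ^ (-a))) (hs_top : s < a)
    (hf_bot : f =O[𝓝[>] 0] (· ^ (-b))) (hs_bot : b < s) :
    HasDerivAt (fun s : ℝ ↦ ∫ t in Set.Ioi (0 : ℝ), t ^ (s - 1) * f t)
      (∫ t in Set.Ioi (0 : ℝ), t ^ (s - 1) * (log t * f t)) s := by
  have hf_ofReal : LocallyIntegrableOn (fun t ↦ (f t : ℂ)) (Set.Ioi 0) := fun x hx ↦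
    let ⟨u, hu, hfu⟩ := hf x hx
    ⟨u, hu, hfu.ofReal⟩
  have h_mellin := (mellin_hasDerivAt_of_isBigO_rpow (s := s) hf_ofReal
    (Complex.isBigO_ofReal_left.2 hf_top) hs_top
    (Complex.isBigO_ofReal_left.2 hf_bot) hs_bot).2
  have h_log : (fun t : ℝ ↦ log t • (f t : ℂ)) = fun t ↦ ((log t * f t : ℝ) : ℂ) := by
    ext t
    simp
  simpa only [h_log, mellin_ofReal, Complex.ofReal_re] using h_mellin.real_of_complex

lemma hasDerivAt_integral_rpow_neg_mul {f : ℝ → ℝ} {a b α : ℝ}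
    (hf : LocallyIntegrableOn f (Set.Ioi 0))
    (hf_top : f =O[atTop] (· ^ (-a))) (hα_top : 1 - α < a)
    (hf_bot : f =O[𝓝[>] 0] (· ^ (-b))) (hα_bot : b < 1 - α) :
    HasDerivAt (fun α : ℝ ↦ ∫ t in Set.Ioi (0 : ℝ), t ^ (-α) * f t)
      (-∫ t in Set.Ioi (0 : ℝ), t ^ (-α) * (log t * f t)) α := by
  have h_sub (β : ℝ) : 1 - β - 1 = -β := by ring
  simpa only [h_sub] using
    (hasDerivAt_integral_rpow_sub_one_mul hf hf_top hα_top hf_bot hα_bot).comp_const_sub 1 α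

lemma isEquivalent_const_add_sq_rpow (c p : ℝ) :
    (fun x : ℝ ↦ (c + x ^ 2) ^ p) ~[atTop] (· ^ (2 * p)) := by
  have h_base : (fun x : ℝ ↦ c + x ^ 2) ~[atTop] (· ^ 2) :=
    IsEquivalent.refl.const_add_of_norm_tendsto_atTop
      (tendsto_norm_atTop_atTop.comp (tendsto_pow_atTop two_ne_zero))
  refine (h_base.rpow (fun x ↦ sq_nonneg x)).congr_right ?_
  filter_upwards [eventually_ge_atTop 0] with x hx
  exact_mod_cast (rpow_natCast_mul hx 2 p).symm

/-- The spectral density of the Matérn covariance, without the singular factor `ω ^ (-α)`: the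
paper's `S_α(ω)` is `ω ^ (-α) * maternDensity φ ρ ν ω`. -/
noncomputable def maternDensity (φ ρ ν ω : ℝ) : ℝ :=
  φ ^ 2 * (ρ ^ 2 + ω ^ 2) ^ (-ν - 1 / 2)

lemma continuous_maternDensity (φ : ℝ) {ρ : ℝ} (hρ : ρ ≠ 0) (ν : ℝ) :
    Continuous (maternDensity φ ρ ν) := by
  have h_base : Continuous fun ω : ℝ ↦ ρ ^ 2 + ω ^ 2 := by fun_prop
  exact continuous_const.mul (h_base.rpow_const fun ω ↦ .inl (by positivity))

lemma maternDensity_isBigO_atTop (φ ρ ν : ℝ) :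
    maternDensity φ ρ ν =O[atTop] (· ^ (-(2 * ν + 1))) := by
  have h_exp : 2 * (-ν - 1 / 2) = -(2 * ν + 1) := by ring
  rw [← h_exp]
  exact (isEquivalent_const_add_sq_rpow (ρ ^ 2) (-ν - 1 / 2)).isBigO.const_mul_left (φ ^ 2)

theorem singular_matern_deriv_in_alpha_general (r φ ρ ν α₀ : ℝ) (hρ : ρ ≠ 0)
    (hα : α₀ ∈ Set.Ioo (-(2 * ν)) 1) :
    HasDerivAt
      (fun α : ℝ ↦ ∫ ω in Set.Ioi (0 : ℝ),
        ω ^ (-α) * maternDensity φ ρ ν ω * cos (2 * π * ω * r))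
      (-∫ ω in Set.Ioi (0 : ℝ),
        ω ^ (-α₀) * log ω * maternDensity φ ρ ν ω * cos (2 * π * ω * r))
      α₀ := by
  let f (ω : ℝ) : ℝ := maternDensity φ ρ ν ω * cos (2 * π * ω * r)
  have hf : Continuous f := (continuous_maternDensity φ hρ ν).mul (by fun_prop)
  have hf_le : ∀ ω, ‖f ω‖ ≤ ‖maternDensity φ ρ ν ω‖ := fun ω ↦ by
    simpa [f] using mul_le_of_le_one_right (abs_nonneg _) (abs_cos_le_one (2 * π * ω * r))
  have hf_top : f =O[atTop] (· ^ (-(2 * ν + 1))) :=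
    (isBigO_of_le _ hf_le).trans (maternDensity_isBigO_atTop φ ρ ν)
  have hf_bot : f =O[𝓝[>] 0] (· ^ (-0 : ℝ)) := by
    simpa using ((hf.tendsto 0).isBigO_one ℝ).mono nhdsWithin_le_nhds
  simpa only [f, mul_assoc] using hasDerivAt_integral_rpow_neg_mul (α := α₀)
    (hf.locallyIntegrable.locallyIntegrableOn _) hf_top (by linarith [hα.1])
    hf_bot (by linarith [hα.2])

/-- Fix `r ≥ 0`, `φ`, `ρ > 0`, `ν > 0`, and `α₀ ∈ (0, 1)`. Then the map
`α ↦ ∫_0^∞ ω^(−α) φ²(ρ² + ω²)^(−ν−1/2) cos(2πωr) dω` is differentiable at `α₀` with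
derivative `−∫_0^∞ ω^(−α₀) log ω φ²(ρ² + ω²)^(−ν−1/2) cos(2πωr) dω`. -/
theorem singular_matern_deriv_in_alpha (r φ ρ ν α₀ : ℝ) (hr : 0 ≤ r) (hρ : 0 < ρ)
    (hν : 0 < ν) (hα : α₀ ∈ Set.Ioo (0 : ℝ) 1) :
    HasDerivAt
      (fun α : ℝ => ∫ ω in Set.Ioi (0 : ℝ),
        ω ^ (-α) * (φ ^ 2 * (ρ ^ 2 + ω ^ 2) ^ (-ν - 1 / 2)) * Real.cos (2 * π * ω * r))
      (-∫ ω in Set.Ioi (0 : ℝ),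
        ω ^ (-α₀) * Real.log ω * (φ ^ 2 * (ρ ^ 2 + ω ^ 2) ^ (-ν - 1 / 2))
          * Real.cos (2 * π * ω * r))
      α₀ :=
  singular_matern_deriv_in_alpha_general r φ ρ ν α₀ hρ.ne' ⟨by linarith [hα.1], hα.2⟩
end
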